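/- Let d ≥ 3 and n ≥ 1. There exists a polynomial p_n in d complex variables (c_1,…,c_{d−2},a,w) such that: (1) for every (c,a) ∈ ℂ^{d−1} and every w ∈ ℂ with w ≠ 1, p_n(c,a,w) = 0 if and only if P_{c,a} has a cycle of exact period n and multiplier w, i.e. there exists z ∈ ℂ with P_{c,a}^{∘n}(z) = z, P_{c,a}^{∘m}(z) ≠ z for all 1 ≤ m < n, and (P_{c,a}^{∘n})'(z) = w; (2) for every (c,a) ∈ ℂ^{d−1}, p_n(c,a,1) = 0 if and only if there exists an integer q ≥ 1 dividing n and a primitive q-th root of unity η such that P_{c,a} has a cycle of exact period n/q and multiplier η. -/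

import Mathlib

open Filter Topology MeasureTheory

/-- Elementary symmetric polynomial of degree `m` in the values of `c`. -/
noncomputable def sigmaE {n : ℕ} (c : Fin n → ℂ) (m : ℕ) : ℂ :=
  (Multiset.map c Finset.univ.val).esymm m

/-- The polynomial `P_{c,a}`. -/
noncomputable def Pca (d : ℕ) (c : Fin (d - 2) → ℂ) (a : ℂ) (z : ℂ) : ℂ :=
  z ^ d / (d : ℂ) +
    (∑ j ∈ Finset.Icc 2 (d - 1), (-1 : ℂ) ^ (d - j) * sigmaE c (d - j) * z ^ j / (j : ℂ)) +
    a ^ d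

/-- The critical points `c₀ = 0, c₁, …, c_{d-2}` of `P_{c,a}`. -/
noncomputable def critPt {d : ℕ} (c : Fin (d - 2) → ℂ) (i : Fin (d - 1)) : ℂ :=
  if h : (i : ℕ) = 0 then 0 else c ⟨(i : ℕ) - 1, by have := i.isLt; omega⟩

/-- The orbit of `z` under `P_{c,a}` is bounded. -/
def boundedOrbit (d : ℕ) (c : Fin (d - 2) → ℂ) (a z : ℂ) : Prop :=
  Bornology.IsBounded (Set.range fun n => (Pca d c a)^[n] z)

/-- The Green function of `P_{c,a}`. -/
noncomputable def green (d : ℕ) (c : Fin (d - 2) → ℂ) (a z : ℂ) : ℝ :=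
  limUnder atTop (fun n : ℕ => Real.log (max 1 (‖(Pca d c a)^[n] z‖)) / (d : ℝ) ^ n)

/-- `G(c,a)`, the max of the Green function over the critical points. -/
noncomputable def Gmax (d : ℕ) (c : Fin (d - 2) → ℂ) (a : ℂ) : ℝ :=
  ⨆ i : Fin (d - 1), green d c a (critPt c i)

/-- The connectedness locus `C_d`. -/
def connLocus (d : ℕ) : Set ((Fin (d - 2) → ℂ) × ℂ) :=
  {p | ∀ i : Fin (d - 1), boundedOrbit d p.1 p.2 (critPt p.1 i)}

/-- The filled-in Julia set of `P_{c,a}`. -/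
def filledJulia (d : ℕ) (c : Fin (d - 2) → ℂ) (a : ℂ) : Set ℂ :=
  {z | boundedOrbit d c a z}

/-- `P_{c,a}` has a cycle of exact period `n` and multiplier `w`. -/
def HasExactCycle (d : ℕ) (c : Fin (d - 2) → ℂ) (a : ℂ) (n : ℕ) (w : ℂ) : Prop :=
  ∃ z : ℂ, (Pca d c a)^[n] z = z ∧ (∀ m : ℕ, 1 ≤ m → m < n → (Pca d c a)^[m] z ≠ z) ∧
    deriv ((Pca d c a)^[n]) z = w

/-- The assignment of the `d` variables `(c₁, …, c_{d-2}, a, w)`. -/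
noncomputable def varAssign (d : ℕ) (c : Fin (d - 2) → ℂ) (a w : ℂ) : Fin d → ℂ :=
  fun i => if h : (i : ℕ) < d - 2 then c ⟨(i : ℕ), h⟩ else if (i : ℕ) = d - 2 then a else w

/-!
Factor `P^{∘n} - X` over the polynomial ring in the parameters and let `Φ` be the product of its
prime factors dividing no `P^{∘k} - X` with `k` a proper divisor of `n`. Specialising the parameters
to `0` turns `P^{∘n} - X` into the separable polynomial `b X^{d^n} - X`, so `P^{∘n} - X` is
squarefree and, for `k ∣ n`, a prime factor of `(P^{∘n} - X) / (P^{∘k} - X)` never divides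
`P^{∘k} - X`. At a point of period `k` and multiplier `λ`, that quotient takes the value
`1 + λ + ⋯ + λ^{n/k - 1}`. Hence, for all parameters, the roots of `Φ` are the points of exact
period `n` together with those of exact period `n / q` whose multiplier is a primitive `q`-th root
of unity; the latter have multiplier `1` under `P^{∘n}`. Eliminating `z` between `Φ(z) = 0` and
`(P^{∘n})'(z) = w` by a resultant gives `p_n`.
-/

section Polynomial

open Polynomial Function

theorem minimalPeriod_eq_iff_of_pos {α : Type*} {f : α → α} {x : α} {n : ℕ} (hn : 0 < n) :
    minimalPeriod f x = n ↔ f^[n] x = x ∧ ∀ m, 1 ≤ m → m < n → f^[m] x ≠ x := by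
  constructor
  · rintro rfl
    exact ⟨iterate_minimalPeriod, fun m hm hmn ↦
      not_isPeriodicPt_of_pos_of_lt_minimalPeriod (Nat.ne_of_gt hm) hmn⟩
  · rintro ⟨hper, hmin⟩
    refine (IsPeriodicPt.minimalPeriod_le hn hper).antisymm (not_lt.mp fun hlt ↦ ?_)
    exact hmin _ (IsPeriodicPt.minimalPeriod_pos hn hper) hlt iterate_minimalPeriod

section Iteration

variable {R S : Type*} [CommRing R] [CommRing S]

/-- The `n`-fold composite `P ∘ ⋯ ∘ P`, as a polynomial. -/
noncomputable def iterComp (P : R[X]) (n : ℕ) : R[X] :=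
  P.comp^[n] X

/-- The polynomial `P^{∘n} - X`, whose roots are the points of period dividing `n`. -/
noncomputable def periodicPoly (P : R[X]) (n : ℕ) : R[X] :=
  iterComp P n - X

/-- The derivative of `P^{∘n}` at `z`: the multiplier of the cycle of `z` when `z` has exact
period `n`. -/
noncomputable def multiplier (P : R[X]) (n : ℕ) (z : R) : R :=
  (derivative (iterComp P n)).eval z

/-- The polynomial map `P` has a cycle of exact period `n` and multiplier `w`. -/
def HasCycle (P : R[X]) (n : ℕ) (w : R) : Prop :=
  ∃ z, minimalPeriod (fun x ↦ P.eval x) z = n ∧ multiplier P n z = w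

theorem iterComp_zero (P : R[X]) : iterComp P 0 = X := rfl

theorem iterComp_succ (P : R[X]) (n : ℕ) : iterComp P (n + 1) = P.comp (iterComp P n) :=
  iterate_succ_apply' _ _ _

theorem iterComp_add (P : R[X]) (m n : ℕ) :
    iterComp P (m + n) = (iterComp P m).comp (iterComp P n) := by
  induction m with
  | zero => rw [zero_add, iterComp_zero, X_comp]
  | succ m ih => rw [Nat.add_right_comm, iterComp_succ, iterComp_succ, ih, Polynomial.comp_assoc]

theorem iterComp_mul (P : R[X]) (m n : ℕ) : iterComp P (m * n) = iterComp (iterComp P m) n := by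
  induction n with
  | zero => rfl
  | succ n ih => rw [Nat.mul_succ, add_comm, iterComp_add, ih, iterComp_succ]

theorem map_iterComp (φ : R →+* S) (P : R[X]) (n : ℕ) :
    (iterComp P n).map φ = iterComp (P.map φ) n := by
  induction n with
  | zero => exact map_X φ
  | succ n ih => rw [iterComp_succ, iterComp_succ, map_comp, ih]

theorem map_periodicPoly (φ : R →+* S) (P : R[X]) (n : ℕ) :
    (periodicPoly P n).map φ = periodicPoly (P.map φ) n := by
  rw [periodicPoly, Polynomial.map_sub, map_iterComp, map_X, periodicPoly]

theorem eval_iterComp (P : R[X]) (n : ℕ) (z : R) :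
    (iterComp P n).eval z = (fun x ↦ P.eval x)^[n] z := by
  rw [iterComp, iterate_comp_eval, eval_X]

theorem eval_periodicPoly_eq_zero_iff {P : R[X]} {n : ℕ} {z : R} :
    (periodicPoly P n).eval z = 0 ↔ IsPeriodicPt (fun x ↦ P.eval x) n z := by
  rw [periodicPoly, eval_sub, eval_iterComp, eval_X, sub_eq_zero, IsPeriodicPt, IsFixedPt]

theorem multiplier_mul {P : R[X]} {m : ℕ} {z : R} (hz : IsPeriodicPt (fun x ↦ P.eval x) m z)
    (r : ℕ) : multiplier P (m * r) z = multiplier P m z ^ r := by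
  induction r with
  | zero => simp [multiplier, iterComp_zero]
  | succ r ih =>
    have hfix : (iterComp P (m * r)).eval z = z := (eval_iterComp P _ z).trans (hz.mul_const r)
    rw [multiplier, Nat.mul_succ, add_comm, iterComp_add, derivative_comp, eval_mul, eval_comp,
      hfix, pow_succ, ← ih, multiplier, multiplier]

theorem exists_comp_add_eq (G h : R[X]) :
    ∃ k, G.comp (X + h) = G + derivative G * h + k * h ^ 2 := by
  obtain ⟨k, hk⟩ := binomExpansion (G.map C) X h
  have heval (F q : R[X]) : (F.map C).eval q = F.comp q := eval_map C q
  simp only [derivative_map, heval, comp_X] at hk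
  exact ⟨k, hk⟩

theorem exists_iterComp_sub_X_eq (G : R[X]) (r : ℕ) :
    ∃ Q, iterComp G r - X = (G - X) * Q ∧
      G - X ∣ Q - ∑ j ∈ Finset.range r, derivative G ^ j := by
  induction r with
  | zero => exact ⟨0, by simp [iterComp_zero]⟩
  | succ r ih =>
    obtain ⟨Q, hQ, T, hT⟩ := ih
    obtain ⟨k, hk⟩ := exists_comp_add_eq G ((G - X) * Q)
    refine ⟨1 + derivative G * Q + k * (G - X) * Q ^ 2, ?_, derivative G * T + k * Q ^ 2, ?_⟩
    · rw [iterComp_succ, eq_add_of_sub_eq' hQ, hk]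
      ring
    · rw [geom_sum_succ]
      linear_combination derivative G * hT

/-- The cofactor is determined modulo `P^{∘m} - X` by a first-order Taylor expansion, so its value
at a point of period `m` is a geometric sum in the multiplier. -/
theorem exists_periodicPoly_mul_eq (P : R[X]) (m r : ℕ) :
    ∃ Q, periodicPoly P (m * r) = periodicPoly P m * Q ∧
      periodicPoly P m ∣ Q - ∑ j ∈ Finset.range r, derivative (iterComp P m) ^ j := by
  simpa only [periodicPoly, iterComp_mul] using exists_iterComp_sub_X_eq (iterComp P m) r

theorem eval_map_eq_geom_sum_multiplier (φ : R →+* S) {P Q : R[X]} {m r : ℕ} {z : S}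
    (hQ : periodicPoly P m ∣ Q - ∑ j ∈ Finset.range r, derivative (iterComp P m) ^ j)
    (hz : IsPeriodicPt (fun x ↦ (P.map φ).eval x) m z) :
    (Q.map φ).eval z = ∑ j ∈ Finset.range r, multiplier (P.map φ) m z ^ j := by
  have h := eval_dvd (x := z) (Polynomial.map_dvd φ hQ)
  rw [map_periodicPoly, eval_periodicPoly_eq_zero_iff.mpr hz, zero_dvd_iff, Polynomial.map_sub,
    eval_sub, sub_eq_zero] at h
  simp only [h, Polynomial.map_sum, Polynomial.map_pow, eval_finsetSum, eval_pow, multiplier,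
    ← map_iterComp, derivative_map]

theorem isPeriodicPt_of_dvd_periodicPoly (φ : R →+* S) {P f : R[X]} {k : ℕ} {z : S}
    (hf : f ∣ periodicPoly P k) (hz : (f.map φ).eval z = 0) :
    IsPeriodicPt (fun x ↦ (P.map φ).eval x) k z := by
  rw [← eval_periodicPoly_eq_zero_iff, ← map_periodicPoly, ← zero_dvd_iff, ← hz]
  exact eval_dvd (Polynomial.map_dvd φ hf)

end Iteration

section LeadingCoeff

variable {R : Type*} [CommRing R] [IsDomain R] {P : R[X]}

theorem isUnit_leadingCoeff_iterComp (hP : P.natDegree ≠ 0) (hlc : IsUnit P.leadingCoeff)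
    (n : ℕ) : IsUnit (iterComp P n).leadingCoeff := by
  induction n with
  | zero => simp [iterComp_zero]
  | succ n ih =>
    have hdeg : (iterComp P n).natDegree ≠ 0 := by
      rw [iterComp, natDegree_iterate_comp, natDegree_X, mul_one]
      exact pow_ne_zero n hP
    rw [iterComp_succ, leadingCoeff_comp hdeg]
    exact hlc.mul (ih.pow _)

theorem isUnit_leadingCoeff_periodicPoly (hP : 1 < P.natDegree) (hlc : IsUnit P.leadingCoeff)
    {n : ℕ} (hn : n ≠ 0) : IsUnit (periodicPoly P n).leadingCoeff := by
  have hdeg : degree (X : R[X]) < degree (iterComp P n) := degree_lt_degree <| by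
    rw [iterComp, natDegree_iterate_comp, natDegree_X, mul_one]
    exact one_lt_pow₀ hP hn
  rw [periodicPoly, leadingCoeff_sub_of_degree_lt hdeg]
  exact isUnit_leadingCoeff_iterComp (by lia) hlc n

theorem isUnit_leadingCoeff_of_dvd {f g : R[X]} (h : f ∣ g) (hg : IsUnit g.leadingCoeff) :
    IsUnit f.leadingCoeff :=
  isUnit_of_dvd_unit (leadingCoeff_dvd_leadingCoeff h) hg

theorem squarefree_of_squarefree_map {S : Type*} [CommRing S] [IsDomain S] (φ : R →+* S)
    {f : R[X]} (hf : IsUnit f.leadingCoeff) (h : Squarefree (f.map φ)) : Squarefree f := by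
  intro g hg
  refine isUnit_of_isUnit_leadingCoeff_of_isUnit_map φ
    (isUnit_leadingCoeff_of_dvd (dvd_of_mul_left_dvd hg) hf) (h _ ?_)
  rw [← Polynomial.map_mul]
  exact Polynomial.map_dvd φ hg

end LeadingCoeff

section Squarefree

variable {K : Type*} [Field K]

theorem iterComp_C_mul_X_pow (e : K) (d n : ℕ) :
    ∃ b, iterComp (C e * X ^ d) n = C b * X ^ d ^ n := by
  induction n with
  | zero => exact ⟨1, by simp [iterComp_zero]⟩
  | succ n ih =>
    obtain ⟨b, hb⟩ := ih
    refine ⟨e * b ^ d, ?_⟩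
    rw [iterComp_succ, hb, mul_comp, C_comp, X_pow_comp, mul_pow, ← pow_mul, ← pow_succ, C_mul,
      C_pow, mul_assoc]

variable [CharZero K]

theorem separable_C_mul_X_pow_sub_X (b : K) {N : ℕ} (hN : 1 < N) :
    (C b * X ^ N - X).Separable := by
  obtain ⟨k, rfl⟩ : ∃ k, N = k + 2 := ⟨N - 2, by lia⟩
  have hk : C ((k + 1 : K)⁻¹) * (k + 1 : K[X]) = 1 := by
    rw [← C_eq_natCast, ← C_1, ← C_add, ← C_mul, inv_mul_cancel₀ (Nat.cast_add_one_ne_zero k)]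
  -- For `f = b X^(k+2) - X`, the identity `X f' - (k + 2) f = (k + 1) X` recovers `X`, and `X` and
  -- `f'` are coprime.
  refine (separable_def' _).mpr ⟨-((k + 2 : K[X]) ^ 2 * C b * X ^ k * C ((k + 1 : K)⁻¹)),
    (k + 2 : K[X]) * C b * X ^ (k + 1) * C ((k + 1 : K)⁻¹) - 1, ?_⟩
  simp only [derivative_sub, derivative_C_mul_X_pow, derivative_X, C_mul, C_eq_natCast,
    Nat.add_succ_sub_one, Nat.cast_add, Nat.cast_ofNat, C_add, C_ofNat]
  linear_combination (k + 2 : K[X]) * C b * X ^ (k + 1) * hk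

theorem squarefree_periodicPoly_of_map_eq {R : Type*} [CommRing R] [IsDomain R] {P : R[X]}
    (hP : 1 < P.natDegree) (hlc : IsUnit P.leadingCoeff) {φ : R →+* K} {e : K}
    (hφ : P.map φ = C e * X ^ P.natDegree) {n : ℕ} (hn : n ≠ 0) :
    Squarefree (periodicPoly P n) := by
  obtain ⟨b, hb⟩ := iterComp_C_mul_X_pow e P.natDegree n
  refine squarefree_of_squarefree_map φ (isUnit_leadingCoeff_periodicPoly hP hlc hn) ?_
  rw [map_periodicPoly, hφ, periodicPoly, hb]
  exact (separable_C_mul_X_pow_sub_X b (one_lt_pow₀ hP hn)).squarefree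

end Squarefree

section Dynatomic

open UniqueFactorizationMonoid

theorem map_eq_zero_iff_exists_prime_dvd {A B : Type*} [CommRing A]
    [UniqueFactorizationMonoid A] [CommRing B] [IsDomain B] (f : A →+* B) {a : A} (ha : a ≠ 0) :
    f a = 0 ↔ ∃ p, Prime p ∧ p ∣ a ∧ f p = 0 := by
  constructor
  · intro h
    induction a using induction_on_prime with
    | h₁ => exact absurd rfl ha
    | h₂ a hu => exact absurd h (hu.map f).ne_zero
    | h₃ a p ha' hp ih =>
      rcases mul_eq_zero.mp ((map_mul f p a).symm.trans h) with h | h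
      · exact ⟨p, hp, dvd_mul_right p a, h⟩
      · obtain ⟨q, hq, hqa, hq0⟩ := ih ha' h
        exact ⟨q, hq, hqa.mul_left p, hq0⟩
  · rintro ⟨p, -, hpa, hp⟩
    exact zero_dvd_iff.mp (hp ▸ map_dvd f hpa)

variable {R : Type*} [CommRing R] [UniqueFactorizationMonoid R]

open Classical in
/-- The `n`-th dynatomic polynomial of `P`, up to a unit and as long as `P^{∘n} - X` is squarefree:
the product of those prime factors of `P^{∘n} - X` that divide no `P^{∘k} - X` with `k` a proper
divisor of `n`. The usual definition is the Möbius product `∏_{k ∣ n} (P^{∘k} - X)^{μ(n/k)}`. -/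
noncomputable def dynatomic (P : R[X]) (n : ℕ) : R[X] :=
  ((factors (periodicPoly P n)).filter
    fun p ↦ ∀ k ∈ n.properDivisors, ¬ p ∣ periodicPoly P k).prod

variable {P : R[X]} {n : ℕ}

theorem dynatomic_dvd_periodicPoly (hF : periodicPoly P n ≠ 0) :
    dynatomic P n ∣ periodicPoly P n := by
  classical
  exact (Multiset.prod_dvd_prod_of_le (Multiset.filter_le _ _)).trans (factors_prod hF).dvd

theorem dynatomic_ne_zero (hF : periodicPoly P n ≠ 0) : dynatomic P n ≠ 0 :=
  ne_zero_of_dvd_ne_zero hF (dynatomic_dvd_periodicPoly hF)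

variable [IsDomain R]

theorem prime_dvd_dynatomic_iff (hF : periodicPoly P n ≠ 0) {p : R[X]} (hp : Prime p) :
    p ∣ dynatomic P n ↔
      p ∣ periodicPoly P n ∧ ∀ k ∈ n.properDivisors, ¬ p ∣ periodicPoly P k := by
  classical
  constructor
  · intro h
    obtain ⟨p', hp', hdvd⟩ := hp.exists_mem_multiset_dvd h
    obtain ⟨hmem, hprop⟩ := Multiset.mem_filter.mp hp'
    have hassoc : Associated p p' := hp.associated_of_dvd (prime_of_factor _ hmem) hdvd
    exact ⟨hdvd.trans (dvd_of_mem_factors hmem), fun k hk hpk ↦ hprop k hk (hassoc.dvd'.trans hpk)⟩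
  · rintro ⟨hdvd, hprop⟩
    obtain ⟨p', hmem, hassoc⟩ := exists_mem_factors_of_dvd hF hp.irreducible hdvd
    exact hassoc.dvd.trans (Multiset.dvd_prod (Multiset.mem_filter.mpr
      ⟨hmem, fun k hk hpk ↦ hprop k hk (hassoc.dvd.trans hpk)⟩))

end Dynatomic

section FormalPeriod

variable {R : Type*} [CommRing R]

theorem isPrimitiveRoot_of_geom_sum_eq_zero [CharZero R] {l : R} {q : ℕ} (hq0 : q ≠ 0)
    (hq1 : q ≠ 1)
    (h : ∀ r t, r * t = q → t ≠ 1 → ∑ j ∈ Finset.range t, (l ^ r) ^ j = 0) :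
    IsPrimitiveRoot l q := by
  have hlq : l ^ q = 1 := by
    have := geom_sum_mul (l ^ 1) q
    rwa [h 1 q (one_mul q) hq1, zero_mul, pow_one, eq_comm, sub_eq_zero] at this
  obtain ⟨t, ht⟩ := orderOf_dvd_of_pow_eq_one hlq
  obtain rfl | ht1 := eq_or_ne t 1
  · exact IsPrimitiveRoot.iff_orderOf.mpr (by rw [ht, mul_one])
  · have hsum := h _ t ht.symm ht1
    simp only [pow_orderOf_eq_one, one_pow, Finset.sum_const, Finset.card_range, nsmul_one,
      Nat.cast_eq_zero] at hsum
    exact absurd (by rw [ht, hsum, mul_zero]) hq0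

/-- The point `z` has formal period `n` for the polynomial map `P`: its exact period `m` divides `n`
and, unless `m = n`, its multiplier is a primitive `n / m`-th root of unity. In characteristic zero
these are the roots of the `n`-th dynatomic polynomial. -/
def HasFormalPeriod (P : R[X]) (n : ℕ) (z : R) : Prop :=
  ∃ q, minimalPeriod (fun x ↦ P.eval x) z * q = n ∧
    (q = 1 ∨ IsPrimitiveRoot (multiplier P (minimalPeriod (fun x ↦ P.eval x) z) z) q)

variable {P : R[X]} {n : ℕ}

theorem exists_hasFormalPeriod_multiplier_eq_iff_of_ne_one {w : R} (hw : w ≠ 1) :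
    (∃ z, HasFormalPeriod P n z ∧ multiplier P n z = w) ↔ HasCycle P n w := by
  refine exists_congr fun z ↦ and_congr_left fun hz ↦
    ⟨?_, fun h ↦ ⟨1, by rw [mul_one, h], .inl rfl⟩⟩
  rintro ⟨q, rfl, rfl | hq⟩
  · rw [mul_one]
  · rw [multiplier_mul (isPeriodicPt_minimalPeriod _ z), hq.pow_eq_one] at hz
    exact absurd hz.symm hw

theorem exists_hasFormalPeriod_multiplier_eq_one_iff :
    (∃ z, HasFormalPeriod P n z ∧ multiplier P n z = 1) ↔
      ∃ m q η, m * q = n ∧ IsPrimitiveRoot η q ∧ HasCycle P m η := by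
  constructor
  · rintro ⟨z, ⟨q, hmq, hq⟩, hz⟩
    refine ⟨_, q, _, hmq, ?_, z, rfl, rfl⟩
    rcases hq with rfl | hq
    · rw [IsPrimitiveRoot.one_right_iff, ← hz, ← hmq, mul_one]
    · exact hq
  · rintro ⟨_, q, _, rfl, hη, z, rfl, rfl⟩
    refine ⟨z, ⟨q, rfl, .inr hη⟩, ?_⟩
    rw [multiplier_mul (isPeriodicPt_minimalPeriod _ z), hη.pow_eq_one]

end FormalPeriod

section DynatomicRoots

variable {R : Type*} [CommRing R] [UniqueFactorizationMonoid R] {P : R[X]} {n : ℕ}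
  {K : Type*} [CommRing K] {φ : R →+* K} {z : K}

theorem isPeriodicPt_of_eval_dynatomic_eq_zero (hF : periodicPoly P n ≠ 0)
    (hz : ((dynatomic P n).map φ).eval z = 0) : IsPeriodicPt (fun x ↦ (P.map φ).eval x) n z :=
  isPeriodicPt_of_dvd_periodicPoly φ (dynatomic_dvd_periodicPoly hF) hz

variable [IsDomain K]

theorem eval_map_eq_zero_iff_exists_prime_dvd (φ : R →+* K) {f : R[X]} (hf : f ≠ 0) :
    (f.map φ).eval z = 0 ↔ ∃ p, Prime p ∧ p ∣ f ∧ (p.map φ).eval z = 0 :=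
  map_eq_zero_iff_exists_prime_dvd ((evalRingHom z).comp (mapRingHom φ)) hf

variable [IsDomain R]

/-- A prime factor of `P^{∘n} - X` that does not divide `P^{∘k} - X` divides their quotient. -/
theorem geom_sum_multiplier_eq_zero_of_eval_dynatomic_eq_zero (hF : periodicPoly P n ≠ 0)
    (hz : ((dynatomic P n).map φ).eval z = 0) {k r : ℕ} (hn : n ≠ 0) (hkr : k * r = n) (hr : r ≠ 1)
    (hk : IsPeriodicPt (fun x ↦ (P.map φ).eval x) k z) :
    ∑ j ∈ Finset.range r, multiplier (P.map φ) k z ^ j = 0 := by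
  obtain ⟨p, hp, hpΦ, hpz⟩ := (eval_map_eq_zero_iff_exists_prime_dvd φ (dynatomic_ne_zero hF)).mp hz
  obtain ⟨hpF, hpk⟩ := (prime_dvd_dynatomic_iff hF hp).mp hpΦ
  obtain ⟨Q, hQ, hQsum⟩ := exists_periodicPoly_mul_eq P k r
  have hkn : k ∈ n.properDivisors := by
    refine Nat.mem_properDivisors.mpr ⟨⟨r, hkr.symm⟩, ?_⟩
    subst hkr
    have := mul_ne_zero_iff.mp hn
    exact lt_mul_of_one_lt_right (by lia) (by lia)
  have hpQ : p ∣ Q := (hp.dvd_or_dvd (hQ ▸ hkr ▸ hpF)).resolve_left (hpk k hkn)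
  rw [← eval_map_eq_geom_sum_multiplier φ hQsum hk, ← zero_dvd_iff, ← hpz]
  exact eval_dvd (Polynomial.map_dvd φ hpQ)

theorem hasFormalPeriod_of_eval_dynatomic_eq_zero [CharZero K] (hn : n ≠ 0)
    (hF : periodicPoly P n ≠ 0) (hz : ((dynatomic P n).map φ).eval z = 0) :
    HasFormalPeriod (P.map φ) n z := by
  obtain ⟨q, hq⟩ := (isPeriodicPt_of_eval_dynatomic_eq_zero hF hz).minimalPeriod_dvd
  refine ⟨q, hq.symm, or_iff_not_imp_left.mpr fun hq1 ↦ ?_⟩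
  refine isPrimitiveRoot_of_geom_sum_eq_zero (by rintro rfl; exact hn hq) hq1 fun r t hrt ht ↦ ?_
  have hper := isPeriodicPt_minimalPeriod (fun x ↦ (P.map φ).eval x) z
  rw [← multiplier_mul hper]
  exact geom_sum_multiplier_eq_zero_of_eval_dynatomic_eq_zero hF hz hn
    (by rw [mul_assoc, hrt, hq]) ht (hper.mul_const r)

theorem eval_dynatomic_eq_zero_of_minimalPeriod_eq (hF : periodicPoly P n ≠ 0)
    (hz : minimalPeriod (fun x ↦ (P.map φ).eval x) z = n) :
    ((dynatomic P n).map φ).eval z = 0 := by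
  have hFz : ((periodicPoly P n).map φ).eval z = 0 := by
    rw [map_periodicPoly, eval_periodicPoly_eq_zero_iff, ← hz]
    exact isPeriodicPt_minimalPeriod _ z
  obtain ⟨p, hp, hpF, hpz⟩ := (eval_map_eq_zero_iff_exists_prime_dvd φ hF).mp hFz
  refine (eval_map_eq_zero_iff_exists_prime_dvd φ (dynatomic_ne_zero hF)).mpr
    ⟨p, hp, (prime_dvd_dynatomic_iff hF hp).mpr ⟨hpF, fun k hk hpk ↦ ?_⟩, hpz⟩
  obtain ⟨hkn, hlt⟩ := Nat.mem_properDivisors.mp hk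
  have hnk : n ∣ k := hz ▸ (isPeriodicPt_of_dvd_periodicPoly φ hpk hpz).minimalPeriod_dvd
  exact hlt.ne (Nat.dvd_antisymm hkn hnk)

theorem eval_dynatomic_eq_zero_of_isPrimitiveRoot (hn : n ≠ 0)
    (hF : Squarefree (periodicPoly P n)) {q : ℕ} (hq1 : q ≠ 1)
    (hq : minimalPeriod (fun x ↦ (P.map φ).eval x) z * q = n)
    (hprim : IsPrimitiveRoot
      (multiplier (P.map φ) (minimalPeriod (fun x ↦ (P.map φ).eval x) z) z) q) :
    ((dynatomic P n).map φ).eval z = 0 := by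
  have hper := isPeriodicPt_minimalPeriod (fun x ↦ (P.map φ).eval x) z
  set m := minimalPeriod (fun x ↦ (P.map φ).eval x) z
  have hq0 : q ≠ 0 := right_ne_zero_of_mul (hq ▸ hn)
  obtain ⟨Q, hQ, hQsum⟩ := exists_periodicPoly_mul_eq P m q
  rw [hq] at hQ
  have hQz : (Q.map φ).eval z = 0 := by
    rw [eval_map_eq_geom_sum_multiplier φ hQsum hper, hprim.geom_sum_eq_zero (by lia)]
  have hQF : Q ∣ periodicPoly P n := hQ ▸ dvd_mul_left Q _
  obtain ⟨p, hp, hpQ, hpz⟩ := (eval_map_eq_zero_iff_exists_prime_dvd φ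
    (ne_zero_of_dvd_ne_zero hF.ne_zero hQF)).mp hQz
  have hpm : ¬ p ∣ periodicPoly P m := fun hpm ↦
    hp.not_isUnit (hF p (hQ ▸ mul_dvd_mul hpm hpQ))
  refine (eval_map_eq_zero_iff_exists_prime_dvd φ (dynatomic_ne_zero hF.ne_zero)).mpr
    ⟨p, hp, (prime_dvd_dynatomic_iff hF.ne_zero hp).mpr ⟨hpQ.trans hQF, fun k hk hpk ↦ ?_⟩, hpz⟩
  obtain ⟨s, rfl⟩ := (isPeriodicPt_of_dvd_periodicPoly φ hpk hpz).minimalPeriod_dvd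
  obtain ⟨T, hT, hTsum⟩ := exists_periodicPoly_mul_eq P m s
  have hpT : p ∣ T := (hp.dvd_or_dvd (hT ▸ hpk)).resolve_left hpm
  have hTz : ∑ j ∈ Finset.range s, multiplier (P.map φ) m z ^ j = 0 := by
    rw [← eval_map_eq_geom_sum_multiplier φ hTsum hper, ← zero_dvd_iff, ← hpz]
    exact eval_dvd (Polynomial.map_dvd φ hpT)
  have hqs : q ∣ s := hprim.dvd_of_pow_eq_one s <| by
    rw [← sub_eq_zero, ← geom_sum_mul, hTz, zero_mul]
  obtain ⟨hkn, hlt⟩ := Nat.mem_properDivisors.mp hk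
  exact hlt.ne (Nat.dvd_antisymm hkn (hq ▸ mul_dvd_mul_left m hqs))

theorem eval_dynatomic_eq_zero_iff [CharZero K] (hn : n ≠ 0) (hF : Squarefree (periodicPoly P n)) :
    ((dynatomic P n).map φ).eval z = 0 ↔ HasFormalPeriod (P.map φ) n z := by
  refine ⟨hasFormalPeriod_of_eval_dynatomic_eq_zero hn hF.ne_zero, ?_⟩
  rintro ⟨q, hq, hq'⟩
  obtain rfl | hq1 := eq_or_ne q 1
  · exact eval_dynatomic_eq_zero_of_minimalPeriod_eq hF.ne_zero ((mul_one _).symm.trans hq)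
  · exact eval_dynatomic_eq_zero_of_isPrimitiveRoot hn hF hq1 hq (hq'.resolve_left hq1)

end DynatomicRoots

section Resultant

variable {R : Type*} [CommRing R] {K : Type*} [Field K] [IsAlgClosed K]

theorem map_resultant_eq_zero_iff_exists_root (φ : R →+* K) {f g : R[X]}
    (hf : IsUnit f.leadingCoeff) :
    φ (f.resultant g) = 0 ↔ ∃ z, (f.map φ).eval z = 0 ∧ (g.map φ).eval z = 0 := by
  have hf0 : f.map φ ≠ 0 := fun h ↦ (hf.map φ).ne_zero <| by
    rw [leadingCoeff, ← coeff_map, h, coeff_zero]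
  rw [← resultant_map_map, ← natDegree_map_eq_of_isUnit_leadingCoeff φ hf,
    resultant_eq_prod_eval _ _ _ natDegree_map_le (IsAlgClosed.splits _), mul_eq_zero,
    or_iff_right (pow_ne_zero _ (leadingCoeff_ne_zero.mpr hf0)), Multiset.prod_eq_zero_iff,
    Multiset.mem_map]
  simp only [mem_roots hf0, IsRoot]

variable [UniqueFactorizationMonoid R]

/-- The resultant in `X` of the `n`-th dynatomic polynomial and `w - (P^{∘n})'`. As a function of
the coefficients of `P` and of `w`, it vanishes if and only if some root of the former has
multiplier `w`. -/
noncomputable def multiplierResultant (P : R[X]) (n : ℕ) (w : R) : R :=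
  (dynatomic P n).resultant (C w - derivative (iterComp P n))

theorem map_multiplierResultant_eq_zero_iff [IsDomain R] [CharZero K] (φ : R →+* K) {P : R[X]}
    {n : ℕ} (hn : n ≠ 0) (hF : Squarefree (periodicPoly P n))
    (hlc : IsUnit (periodicPoly P n).leadingCoeff) (w : R) :
    φ (multiplierResultant P n w) = 0 ↔
      ∃ z, HasFormalPeriod (P.map φ) n z ∧ multiplier (P.map φ) n z = φ w := by
  rw [multiplierResultant, map_resultant_eq_zero_iff_exists_root φ
    (isUnit_leadingCoeff_of_dvd (dynatomic_dvd_periodicPoly hF.ne_zero) hlc)]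
  refine exists_congr fun z ↦ and_congr (eval_dynatomic_eq_zero_iff hn hF) ?_
  rw [Polynomial.map_sub, map_C, eval_sub, eval_C, ← derivative_map, map_iterComp, sub_eq_zero,
    eq_comm, multiplier]

end Resultant

section Family

variable {R S : Type*} [CommRing R] [Algebra ℚ R] [CommRing S] [Algebra ℚ S] {d : ℕ}

/-- The polynomial `P_{c,a}` with parameters in an arbitrary `ℚ`-algebra, so that it also makes
sense for indeterminate `c` and `a`. -/
noncomputable def pcaPoly (d : ℕ) (c : Fin (d - 2) → R) (a : R) : R[X] :=
  C (algebraMap ℚ R (d : ℚ)⁻¹) * X ^ d +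
    ((∑ j ∈ Finset.Icc 2 (d - 1), C (algebraMap ℚ R (j : ℚ)⁻¹ * (-1) ^ (d - j) *
      (Multiset.map c Finset.univ.val).esymm (d - j)) * X ^ j) + C (a ^ d))

theorem map_pcaPoly (φ : R →+* S) (c : Fin (d - 2) → R) (a : R) :
    (pcaPoly d c a).map φ = pcaPoly d (fun i ↦ φ (c i)) (φ a) := by
  simp only [pcaPoly, Finset.esymm_map_val, Polynomial.map_add, Polynomial.map_mul,
    Polynomial.map_pow, Polynomial.map_sum, map_X, map_C]
  simp only [map_mul, map_pow, map_neg, map_one, map_sum, map_prod, RingHom.map_rat_algebraMap]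

theorem eval_pcaPoly (c : Fin (d - 2) → ℂ) (a z : ℂ) :
    (pcaPoly d c a).eval z = Pca d c a z := by
  simp only [pcaPoly, Pca, sigmaE, eval_add, eval_mul, eval_pow, eval_finsetSum, eval_X, eval_C,
    eq_ratCast, Rat.cast_inv, Rat.cast_natCast, ← add_assoc]
  congr 2
  · ring
  · exact Finset.sum_congr rfl fun j _ ↦ by ring

theorem pcaPoly_zero (hd : d ≠ 0) :
    pcaPoly d (0 : Fin (d - 2) → R) 0 = C (algebraMap ℚ R (d : ℚ)⁻¹) * X ^ d := by
  have hesymm : ∀ j ∈ Finset.Icc 2 (d - 1),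
      (Multiset.map (0 : Fin (d - 2) → R) Finset.univ.val).esymm (d - j) = 0 := fun j hj ↦ by
    rw [Finset.esymm_map_val]
    refine Finset.sum_eq_zero fun t ht ↦ ?_
    have := Finset.mem_Icc.mp hj
    rw [Pi.zero_def, Finset.prod_const, (Finset.mem_powersetCard.mp ht).2, zero_pow (by lia)]
  rw [pcaPoly, Finset.sum_eq_zero fun j hj ↦ by rw [hesymm j hj, mul_zero, C_0, zero_mul],
    zero_pow hd, C_0, add_zero, add_zero]

theorem isUnit_algebraMap_natCast_inv (hd : d ≠ 0) : IsUnit (algebraMap ℚ R (d : ℚ)⁻¹) :=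
  (IsUnit.mk0 _ (inv_ne_zero (Nat.cast_ne_zero.mpr hd))).map _

section Degree

variable [Nontrivial R]

theorem exists_pcaPoly_eq_add (hd : d ≠ 0) (c : Fin (d - 2) → R) (a : R) :
    ∃ Q : R[X], pcaPoly d c a = C (algebraMap ℚ R (d : ℚ)⁻¹) * X ^ d + Q ∧
      Q.degree < (C (algebraMap ℚ R (d : ℚ)⁻¹) * X ^ d).degree := by
  refine ⟨_, rfl, ?_⟩
  rw [degree_C_mul_X_pow d (isUnit_algebraMap_natCast_inv hd).ne_zero, ← mem_degreeLT]
  refine add_mem (sum_mem fun j hj ↦ ?_) ?_ <;> rw [mem_degreeLT]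
  · have hjd := Finset.mem_Icc.mp hj
    exact (degree_C_mul_X_pow_le _ _).trans_lt (Nat.cast_lt.mpr (by lia))
  · exact degree_C_le.trans_lt (Nat.cast_pos.mpr (Nat.pos_of_ne_zero hd))

theorem natDegree_pcaPoly (hd : d ≠ 0) (c : Fin (d - 2) → R) (a : R) :
    (pcaPoly d c a).natDegree = d := by
  obtain ⟨Q, hQ, hdeg⟩ := exists_pcaPoly_eq_add hd c a
  rw [hQ, natDegree_add_eq_left_of_degree_lt hdeg,
    natDegree_C_mul_X_pow _ _ (isUnit_algebraMap_natCast_inv hd).ne_zero]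

theorem isUnit_leadingCoeff_pcaPoly (hd : d ≠ 0) (c : Fin (d - 2) → R) (a : R) :
    IsUnit (pcaPoly d c a).leadingCoeff := by
  obtain ⟨Q, hQ, hdeg⟩ := exists_pcaPoly_eq_add hd c a
  rw [hQ, leadingCoeff_add_of_degree_lt' hdeg, leadingCoeff_C_mul_X_pow]
  exact isUnit_algebraMap_natCast_inv hd

end Degree

theorem hasExactCycle_iff_hasCycle {c : Fin (d - 2) → ℂ} {a w : ℂ} {n : ℕ} (hn : 0 < n) :
    HasExactCycle d c a n w ↔ HasCycle (pcaPoly d c a) n w := by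
  have heval : Pca d c a = fun x ↦ (pcaPoly d c a).eval x :=
    funext fun z ↦ (eval_pcaPoly c a z).symm
  have hiter : (Pca d c a)^[n] = fun z ↦ (iterComp (pcaPoly d c a) n).eval z :=
    funext fun z ↦ by rw [heval, eval_iterComp]
  refine exists_congr fun z ↦ ?_
  rw [minimalPeriod_eq_iff_of_pos hn, and_assoc, multiplier, ← Polynomial.deriv, ← hiter, ← heval]

/-- The polynomial `P_{c,a}` whose parameters `c` and `a` are the first `d - 1` of the `d`
indeterminates; the last one stands for the multiplier. -/
noncomputable def genericPca (hd : 2 ≤ d) : (MvPolynomial (Fin d) ℂ)[X] :=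
  pcaPoly d (fun i ↦ MvPolynomial.X (Fin.castLE (Nat.sub_le d 2) i))
    (MvPolynomial.X ⟨d - 2, by lia⟩)

theorem natDegree_genericPca (hd : 2 ≤ d) : (genericPca hd).natDegree = d :=
  natDegree_pcaPoly (by lia) _ _

theorem isUnit_leadingCoeff_genericPca (hd : 2 ≤ d) : IsUnit (genericPca hd).leadingCoeff :=
  isUnit_leadingCoeff_pcaPoly (by lia) _ _

theorem map_eval_varAssign_genericPca (hd : 2 ≤ d) (c : Fin (d - 2) → ℂ) (a w : ℂ) :
    (genericPca hd).map (MvPolynomial.eval (varAssign d c a w)) = pcaPoly d c a := by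
  simp [genericPca, map_pcaPoly, varAssign]

theorem map_eval_zero_genericPca (hd : 2 ≤ d) :
    (genericPca hd).map (MvPolynomial.eval 0) = C (algebraMap ℚ ℂ (d : ℚ)⁻¹) * X ^ d := by
  simp only [genericPca, map_pcaPoly, MvPolynomial.eval_X, Pi.zero_apply]
  exact pcaPoly_zero (by lia)

theorem isUnit_leadingCoeff_periodicPoly_genericPca (hd : 2 ≤ d) {n : ℕ} (hn : n ≠ 0) :
    IsUnit (periodicPoly (genericPca hd) n).leadingCoeff :=
  isUnit_leadingCoeff_periodicPoly (by rwa [natDegree_genericPca])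
    (isUnit_leadingCoeff_genericPca hd) hn

theorem squarefree_periodicPoly_genericPca (hd : 2 ≤ d) {n : ℕ} (hn : n ≠ 0) :
    Squarefree (periodicPoly (genericPca hd) n) := by
  have hmap : (genericPca hd).map (MvPolynomial.eval 0) =
      C (algebraMap ℚ ℂ (d : ℚ)⁻¹) * X ^ (genericPca hd).natDegree := by
    rw [natDegree_genericPca, map_eval_zero_genericPca]
  exact squarefree_periodicPoly_of_map_eq (by rwa [natDegree_genericPca])
    (isUnit_leadingCoeff_genericPca hd) hmap hn

/-- The polynomial `p_n(c₁, …, c_{d-2}, a, w)` that cuts out the parameters for which some root of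
the `n`-th dynatomic polynomial of `P_{c,a}` has multiplier `w`. -/
noncomputable def perPoly (hd : 2 ≤ d) (n : ℕ) : MvPolynomial (Fin d) ℂ :=
  multiplierResultant (genericPca hd) n (MvPolynomial.X ⟨d - 1, by lia⟩)

theorem eval_perPoly_eq_zero_iff (hd : 2 ≤ d) {n : ℕ} (hn : n ≠ 0) (c : Fin (d - 2) → ℂ)
    (a w : ℂ) : MvPolynomial.eval (varAssign d c a w) (perPoly hd n) = 0 ↔
      ∃ z, HasFormalPeriod (pcaPoly d c a) n z ∧ multiplier (pcaPoly d c a) n z = w := by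
  have hw : varAssign d c a w ⟨d - 1, by lia⟩ = w := by
    rw [varAssign, dif_neg (by lia), if_neg (by lia)]
  rw [perPoly, map_multiplierResultant_eq_zero_iff _ hn (squarefree_periodicPoly_genericPca hd hn)
    (isUnit_leadingCoeff_periodicPoly_genericPca hd hn), map_eval_varAssign_genericPca,
    MvPolynomial.eval_X, hw]

end Family

end Polynomial

theorem stmt5_general (d n : ℕ) (hd : 2 ≤ d) (hn : 1 ≤ n) :
    ∃ p : MvPolynomial (Fin d) ℂ,
      (∀ (c : Fin (d - 2) → ℂ) (a w : ℂ), w ≠ 1 →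
        (MvPolynomial.eval (varAssign d c a w) p = 0 ↔ HasExactCycle d c a n w)) ∧
      (∀ (c : Fin (d - 2) → ℂ) (a : ℂ),
        (MvPolynomial.eval (varAssign d c a 1) p = 0 ↔
          ∃ q : ℕ, 1 ≤ q ∧ q ∣ n ∧ ∃ η : ℂ, η ^ q = 1 ∧
            (∀ m : ℕ, 1 ≤ m → m < q → η ^ m ≠ 1) ∧ HasExactCycle d c a (n / q) η)) := by
  have hn0 : n ≠ 0 := Nat.ne_of_gt hn
  refine ⟨perPoly hd n, fun c a w hw ↦ ?_, fun c a ↦ ?_⟩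
  · rw [eval_perPoly_eq_zero_iff hd hn0, exists_hasFormalPeriod_multiplier_eq_iff_of_ne_one hw,
      hasExactCycle_iff_hasCycle hn]
  rw [eval_perPoly_eq_zero_iff hd hn0, exists_hasFormalPeriod_multiplier_eq_one_iff]
  constructor
  · rintro ⟨m, q, η, rfl, hη, hcycle⟩
    have hq : 0 < q := Nat.pos_of_mul_pos_left hn
    obtain ⟨hη1, hηmin⟩ := (IsPrimitiveRoot.iff hq).mp hη
    refine ⟨q, hq, dvd_mul_left q m, η, hη1, hηmin, ?_⟩
    rwa [Nat.mul_div_cancel m hq, hasExactCycle_iff_hasCycle (Nat.pos_of_mul_pos_right hn)]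
  · rintro ⟨q, hq, hqn, η, hη1, hηmin, hcycle⟩
    exact ⟨n / q, q, η, Nat.div_mul_cancel hqn, (IsPrimitiveRoot.iff hq).mpr ⟨hη1, hηmin⟩,
      (hasExactCycle_iff_hasCycle (Nat.div_pos (Nat.le_of_dvd hn hqn) hq)).mp hcycle⟩

/-- Milnor–Silverman: existence of the polynomial `p_n` defining `Per_n(w)`. -/
theorem stmt5 (d n : ℕ) (hd : 3 ≤ d) (hn : 1 ≤ n) :
    ∃ p : MvPolynomial (Fin d) ℂ,
      (∀ (c : Fin (d - 2) → ℂ) (a w : ℂ), w ≠ 1 →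
        (MvPolynomial.eval (varAssign d c a w) p = 0 ↔ HasExactCycle d c a n w)) ∧
      (∀ (c : Fin (d - 2) → ℂ) (a : ℂ),
        (MvPolynomial.eval (varAssign d c a 1) p = 0 ↔
          ∃ q : ℕ, 1 ≤ q ∧ q ∣ n ∧ ∃ η : ℂ, η ^ q = 1 ∧
            (∀ m : ℕ, 1 ≤ m → m < q → η ^ m ≠ 1) ∧ HasExactCycle d c a (n / q) η)) :=
  stmt5_general d n (by lia) hn
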